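/- arXiv:2103.16691 — 3 statements merged into one kernel-verified Lean document; each statement's English description precedes it below -/
import Mathlib

section
/- Let p, r ∈ k be nonzero and let f(u,v) = p·u³ + r·v³. If there is no λ ∈ k with λ³ = p/r, then the stabilizer of f in GL₂(k) under the action by linear substitution of variables is exactly the set of diagonal matrices {diag(ω^i, ω^j) : 0 ≤ i, j ≤ 2}; in particular it is a group of order 9 isomorphic to Z/3Z × Z/3Z. -/
noncomputable section

open MvPolynomial

/-- The binary cubic form a₀u³ + a₁u²v + a₂uv² + a₃v³ as a polynomial in u = X 0, v = X 1. -/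
def cubicForm (k : Type*) [Field k] (a₀ a₁ a₂ a₃ : k) : MvPolynomial (Fin 2) k :=
  C a₀ * X 0 ^ 3 + C a₁ * X 0 ^ 2 * X 1 + C a₂ * X 0 * X 1 ^ 2 + C a₃ * X 1 ^ 3

/-- The discriminant of the binary cubic form a₀u³ + a₁u²v + a₂uv² + a₃v³. -/
def cubicDisc (k : Type*) [Field k] (a₀ a₁ a₂ a₃ : k) : k :=
  -27 * a₀ ^ 2 * a₃ ^ 2 + a₁ ^ 2 * a₂ ^ 2 + 18 * a₀ * a₁ * a₂ * a₃ -
    4 * a₀ * a₂ ^ 3 - 4 * a₁ ^ 3 * a₃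

/-- The action of `GL₂(k)` on binary cubic forms by linear substitution of the variables:
for `M = [[a,b],[c,d]]`, `(M·f)(u,v) = f(au + bv, cu + dv)`. -/
def glAct (k : Type*) [Field k] (M : GL (Fin 2) k) (p : MvPolynomial (Fin 2) k) :
    MvPolynomial (Fin 2) k :=
  aeval (fun i : Fin 2 =>
    C ((M : Matrix (Fin 2) (Fin 2) k) i 0) * X 0 +
      C ((M : Matrix (Fin 2) (Fin 2) k) i 1) * X 1) p

end

theorem stab_iff (k : Type*) [Field k] (h2 : (2 : k) ≠ 0) (h3 : (3 : k) ≠ 0)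
    (ω : k) (hω : IsPrimitiveRoot ω 3)
    (p r : k) (hp : p ≠ 0) (hr : r ≠ 0)
    (hcube : ¬ ∃ lam : k, lam ^ 3 = p / r) (M : GL (Fin 2) k) :
    glAct k M (cubicForm k p 0 0 r) = cubicForm k p 0 0 r ↔
      ∃ i j : Fin 3, (M : Matrix (Fin 2) (Fin 2) k) =
            !![ω ^ (i : ℕ), 0; 0, ω ^ (j : ℕ)] := by
  constructor
  · intro h
    have hdet : (M : Matrix (Fin 2) (Fin 2) k).det ≠ 0 :=
      ((Matrix.isUnit_iff_isUnit_det _).1 M.isUnit).ne_zero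
    rw [Matrix.det_fin_two] at hdet
    have key : ∀ x y : k,
        p * ((M : Matrix (Fin 2) (Fin 2) k) 0 0 * x + (M : Matrix (Fin 2) (Fin 2) k) 0 1 * y) ^ 3
        + r * ((M : Matrix (Fin 2) (Fin 2) k) 1 0 * x +
          (M : Matrix (Fin 2) (Fin 2) k) 1 1 * y) ^ 3 = p * x ^ 3 + r * y ^ 3 := by
      intro x y
      have h' := congrArg (MvPolynomial.eval ![x, y]) h
      simpa [glAct, cubicForm, MvPolynomial.algebraMap_eq] using h'
    rw [Matrix.eta_fin_two (M : Matrix (Fin 2) (Fin 2) k)]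
    generalize (M : Matrix (Fin 2) (Fin 2) k) 0 0 = a at *
    generalize (M : Matrix (Fin 2) (Fin 2) k) 0 1 = b at *
    generalize (M : Matrix (Fin 2) (Fin 2) k) 1 0 = c at *
    generalize (M : Matrix (Fin 2) (Fin 2) k) 1 1 = d at *
    have e1 : p * a ^ 3 + r * c ^ 3 = p := by simpa using key 1 0
    have e2 : p * b ^ 3 + r * d ^ 3 = r := by simpa using key 0 1
    have e3 := key 1 1
    have e4 := key 1 (-1)
    have h6 : (2 * 3 : k) ≠ 0 := mul_ne_zero h2 h3
    have f1 : p * a ^ 2 * b + r * c ^ 2 * d = 0 := by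
      apply (mul_eq_zero.1 _).resolve_left h6
      linear_combination e3 - e4 - 2 * e2
    have f2 : p * a * b ^ 2 + r * c * d ^ 2 = 0 := by
      apply (mul_eq_zero.1 _).resolve_left h6
      linear_combination e3 + e4 - 2 * e1
    have hab : a * b = 0 := by
      apply (mul_eq_zero.1 _).resolve_left (mul_ne_zero hp hdet)
      linear_combination d * f1 - c * f2
    have hcd : c * d = 0 := by
      apply (mul_eq_zero.1 _).resolve_left (mul_ne_zero hr hdet)
      linear_combination a * f2 - b * f1
    have ha : a ≠ 0 := by
      rintro rfl
      apply hcube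
      refine ⟨c, ?_⟩
      rw [eq_div_iff hr]
      linear_combination e1
    have hb : b = 0 := (mul_eq_zero.1 hab).resolve_left ha
    subst hb
    have hd : d ≠ 0 := by
      rintro rfl
      simp at hdet
    have hc : c = 0 := (mul_eq_zero.1 hcd).resolve_right hd
    subst hc
    have a3 : a ^ 3 = 1 := by
      apply mul_left_cancel₀ hp
      linear_combination e1
    have d3 : d ^ 3 = 1 := by
      apply mul_left_cancel₀ hr
      linear_combination e2
    obtain ⟨i, hi, rfl⟩ := hω.eq_pow_of_pow_eq_one a3
    obtain ⟨j, hj, rfl⟩ := hω.eq_pow_of_pow_eq_one d3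
    exact ⟨⟨i, hi⟩, ⟨j, hj⟩, rfl⟩
  · rintro ⟨i, j, h⟩
    have hi : (ω ^ (i : ℕ)) ^ 3 = 1 := by rw [← pow_mul, mul_comm, pow_mul, hω.pow_eq_one, one_pow]
    have hj : (ω ^ (j : ℕ)) ^ 3 = 1 := by rw [← pow_mul, mul_comm, pow_mul, hω.pow_eq_one, one_pow]
    unfold glAct cubicForm
    rw [h]
    generalize ω ^ (i : ℕ) = a at *
    generalize ω ^ (j : ℕ) = d at *
    have ha : (MvPolynomial.C a : MvPolynomial (Fin 2) k) ^ 3 = 1 := by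
      rw [← map_pow, hi, map_one]
    have hd : (MvPolynomial.C d : MvPolynomial (Fin 2) k) ^ 3 = 1 := by
      rw [← map_pow, hj, map_one]
    simp only [map_add, map_mul, map_pow, MvPolynomial.aeval_X, MvPolynomial.aeval_C,
      MvPolynomial.algebraMap_eq, Matrix.of_apply, Matrix.cons_val_zero, Matrix.cons_val_one,
      map_zero, zero_mul, zero_add, add_zero, mul_pow, ha, hd, one_mul]

theorem stmt16 (k : Type*) [Field k] (h2 : (2 : k) ≠ 0) (h3 : (3 : k) ≠ 0)
    (ω : k) (hω : IsPrimitiveRoot ω 3)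
    (p r : k) (hp : p ≠ 0) (hr : r ≠ 0)
    (hcube : ¬ ∃ lam : k, lam ^ 3 = p / r) :
    {M : GL (Fin 2) k | glAct k M (cubicForm k p 0 0 r) = cubicForm k p 0 0 r} =
        {M : GL (Fin 2) k | ∃ i j : Fin 3,
          (M : Matrix (Fin 2) (Fin 2) k) =
            !![ω ^ (i : ℕ), 0; 0, ω ^ (j : ℕ)]} ∧
      {M : GL (Fin 2) k |
        glAct k M (cubicForm k p 0 0 r) = cubicForm k p 0 0 r}.ncard = 9 := by
  have hset : {M : GL (Fin 2) k | glAct k M (cubicForm k p 0 0 r) = cubicForm k p 0 0 r} =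
        {M : GL (Fin 2) k | ∃ i j : Fin 3,
          (M : Matrix (Fin 2) (Fin 2) k) =
            !![ω ^ (i : ℕ), 0; 0, ω ^ (j : ℕ)]} := by
    ext M
    exact stab_iff k h2 h3 ω hω p r hp hr hcube M
  refine ⟨hset, ?_⟩
  rw [hset]
  have hω0 : ω ≠ 0 := hω.ne_zero (by norm_num)
  have hdet : ∀ x : Fin 3 × Fin 3,
      (!![ω ^ (x.1 : ℕ), 0; 0, ω ^ (x.2 : ℕ)] : Matrix (Fin 2) (Fin 2) k).det ≠ 0 := by
    intro x
    simp [Matrix.det_fin_two, hω0]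
  let g : Fin 3 × Fin 3 → GL (Fin 2) k := fun x =>
    Matrix.GeneralLinearGroup.mkOfDetNeZero _ (hdet x)
  have hg : ∀ x, ((g x : GL (Fin 2) k) : Matrix (Fin 2) (Fin 2) k) =
      !![ω ^ (x.1 : ℕ), 0; 0, ω ^ (x.2 : ℕ)] := fun x => rfl
  have hinj : Function.Injective g := by
    intro x y hxy
    have h := congrArg (fun M : GL (Fin 2) k => (M : Matrix (Fin 2) (Fin 2) k)) hxy
    simp only [hg] at h
    have h0 := congrFun (congrFun h 0) 0
    have h1 := congrFun (congrFun h 1) 1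
    simp only [Matrix.of_apply, Matrix.cons_val_zero, Matrix.cons_val_one] at h0 h1
    exact Prod.ext (Fin.ext (hω.pow_inj x.1.2 y.1.2 h0)) (Fin.ext (hω.pow_inj x.2.2 y.2.2 h1))
  have hr : {M : GL (Fin 2) k | ∃ i j : Fin 3,
          (M : Matrix (Fin 2) (Fin 2) k) =
            !![ω ^ (i : ℕ), 0; 0, ω ^ (j : ℕ)]} = Set.range g := by
    ext M
    constructor
    · rintro ⟨i, j, h⟩
      exact ⟨(i, j), Units.ext h.symm⟩
    · rintro ⟨x, rfl⟩
      exact ⟨x.1, x.2, rfl⟩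
  rw [hr, ← Set.image_univ, Set.ncard_image_of_injective _ hinj, Set.ncard_univ]
  simp
end

section
/- Let p, r ∈ k be nonzero and let f(u,v) = p·u³ + r·v³. If there exists λ ∈ k with λ³ = p/r, then the stabilizer of f in GL₂(k) under the action by linear substitution of variables is exactly the set {diag(ω^i, ω^j) : 0 ≤ i, j ≤ 2} ∪ {antidiagonal matrices [[0, ω^i·λ⁻¹],[ω^j·λ, 0]] : 0 ≤ i, j ≤ 2}; in particular it is a group of order 18 isomorphic to (Z/3Z × Z/3Z) ⋊ Z/2Z. -/
open MvPolynomial in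
theorem cubicForm_inj_aux (k : Type*) [Field k] (h2 : (2 : k) ≠ 0) (a b c d a₂ b₂ c₂ d₂ : k)
    (h : cubicForm k a b c d = cubicForm k a₂ b₂ c₂ d₂) :
    a = a₂ ∧ b = b₂ ∧ c = c₂ ∧ d = d₂ := by
  have e := fun x y : k => congrArg (eval ![x, y]) h
  simp only [cubicForm, map_add, map_mul, map_pow, eval_C, eval_X, Matrix.cons_val_zero,
    Matrix.cons_val_one] at e
  have e1 := e 1 0
  have e2 := e 0 1
  have e3 := e 1 1
  have e4 := e 1 (-1)
  have ha : a = a₂ := by linear_combination e1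
  have hd : d = d₂ := by linear_combination e2
  have hb : b = b₂ := by
    apply mul_left_cancel₀ h2
    linear_combination e3 - e4 - 2 * e2
  have hc : c = c₂ := by
    apply mul_left_cancel₀ h2
    linear_combination e3 + e4 - 2 * e1
  exact ⟨ha, hb, hc, hd⟩

open MvPolynomial in
theorem glAct_diag_aux (k : Type*) [Field k] (M : GL (Fin 2) k) (p r a b c d : k)
    (hM : (M : Matrix (Fin 2) (Fin 2) k) = !![a, b; c, d]) :
    glAct k M (cubicForm k p 0 0 r) =
      cubicForm k (p * a ^ 3 + r * c ^ 3) (3 * (p * a ^ 2 * b + r * c ^ 2 * d))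
        (3 * (p * a * b ^ 2 + r * c * d ^ 2)) (p * b ^ 3 + r * d ^ 3) := by
  have h3 : (C (3 : k) : MvPolynomial (Fin 2) k) = 3 := map_ofNat C 3
  simp [glAct, cubicForm, hM, algebraMap_eq, h3]
  ring

theorem stab_iff_aux (k : Type*) [Field k] (h2 : (2 : k) ≠ 0) (h3 : (3 : k) ≠ 0)
    (M : GL (Fin 2) k) (p r a b c d : k) (hp : p ≠ 0) (hr : r ≠ 0)
    (hM : (M : Matrix (Fin 2) (Fin 2) k) = !![a, b; c, d]) :
    glAct k M (cubicForm k p 0 0 r) = cubicForm k p 0 0 r ↔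
      (b = 0 ∧ c = 0 ∧ a ^ 3 = 1 ∧ d ^ 3 = 1) ∨
      (a = 0 ∧ d = 0 ∧ r * c ^ 3 = p ∧ p * b ^ 3 = r) := by
  rw [glAct_diag_aux k M p r a b c d hM]
  have hdet : a * d - b * c ≠ 0 := by
    have := M.det_ne_zero
    rwa [hM, Matrix.det_fin_two_of] at this
  constructor
  · intro h
    obtain ⟨e1, e2, e3, e4⟩ := cubicForm_inj_aux k h2 _ _ _ _ _ _ _ _ h
    have e2 := (mul_eq_zero.1 e2).resolve_left h3
    have e3 := (mul_eq_zero.1 e3).resolve_left h3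
    have hab : a * b = 0 := by
      have : (p * (a * d - b * c)) * (a * b) = 0 := by
        linear_combination d * e2 - c * e3
      exact (mul_eq_zero.1 this).resolve_left (mul_ne_zero hp hdet)
    have hcd : c * d = 0 := by
      have : (r * (a * d - b * c)) * (c * d) = 0 := by
        linear_combination a * e3 - b * e2
      exact (mul_eq_zero.1 this).resolve_left (mul_ne_zero hr hdet)
    rcases mul_eq_zero.1 hab with ha | hb
    · right
      subst ha
      have hc : c ≠ 0 := by rintro rfl; simp at hdet
      have hd : d = 0 := (mul_eq_zero.1 hcd).resolve_left hc
      subst hd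
      exact ⟨rfl, rfl, by linear_combination e1, by linear_combination e4⟩
    · left
      subst hb
      have hd : d ≠ 0 := by rintro rfl; simp at hdet
      have hc : c = 0 := (mul_eq_zero.1 hcd).resolve_right hd
      subst hc
      refine ⟨rfl, rfl, mul_left_cancel₀ hp ?_, mul_left_cancel₀ hr ?_⟩
      · linear_combination e1
      · linear_combination e4
  · rintro (⟨rfl, rfl, ha, hd⟩ | ⟨rfl, rfl, hc, hb⟩)
    · congr 1
      · linear_combination p * ha
      · ring
      · ring
      · linear_combination r * hd
    · congr 1
      · linear_combination hc
      · ring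
      · ring
      · linear_combination hb

theorem cube_root_aux (k : Type*) [Field k] (ω : k) (hω : IsPrimitiveRoot ω 3) (x : k) :
    x ^ 3 = 1 ↔ ∃ i : Fin 3, x = ω ^ (i : ℕ) := by
  constructor
  · intro h
    obtain ⟨i, hi, e⟩ := hω.eq_pow_of_pow_eq_one h
    exact ⟨⟨i, hi⟩, e.symm⟩
  · rintro ⟨i, rfl⟩
    rw [← pow_mul, mul_comm, pow_mul, hω.pow_eq_one, one_pow]

theorem stmt17 (k : Type*) [Field k] (h2 : (2 : k) ≠ 0) (h3 : (3 : k) ≠ 0)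
    (ω : k) (hω : IsPrimitiveRoot ω 3)
    (p r : k) (hp : p ≠ 0) (hr : r ≠ 0)
    (lam : k) (hlam : lam ^ 3 = p / r) :
    {M : GL (Fin 2) k | glAct k M (cubicForm k p 0 0 r) = cubicForm k p 0 0 r} =
        {M : GL (Fin 2) k |
          (∃ i j : Fin 3, (M : Matrix (Fin 2) (Fin 2) k) =
            !![ω ^ (i : ℕ), 0; 0, ω ^ (j : ℕ)]) ∨
          (∃ i j : Fin 3, (M : Matrix (Fin 2) (Fin 2) k) =
            !![0, ω ^ (i : ℕ) * lam⁻¹; ω ^ (j : ℕ) * lam, 0])} ∧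
      {M : GL (Fin 2) k |
        glAct k M (cubicForm k p 0 0 r) = cubicForm k p 0 0 r}.ncard = 18 := by
  have hl3 : lam ^ 3 * r = p := by rw [hlam]; field_simp
  have hl : lam ≠ 0 := by
    rintro rfl
    apply hp
    rw [← hl3]
    ring
  have hω0 : ω ≠ 0 := hω.ne_zero (by norm_num)
  have hinj : ∀ i j : Fin 3, ω ^ (i : ℕ) = ω ^ (j : ℕ) → i = j := fun i j h =>
    Fin.ext (hω.pow_inj i.2 j.2 h)
  have hset : {M : GL (Fin 2) k | glAct k M (cubicForm k p 0 0 r) = cubicForm k p 0 0 r} =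
        {M : GL (Fin 2) k |
          (∃ i j : Fin 3, (M : Matrix (Fin 2) (Fin 2) k) =
            !![ω ^ (i : ℕ), 0; 0, ω ^ (j : ℕ)]) ∨
          (∃ i j : Fin 3, (M : Matrix (Fin 2) (Fin 2) k) =
            !![0, ω ^ (i : ℕ) * lam⁻¹; ω ^ (j : ℕ) * lam, 0])} := by
    ext M
    simp only [Set.mem_ofPred_eq]
    constructor
    · intro h
      rw [stab_iff_aux k h2 h3 M p r _ _ _ _ hp hr (Matrix.eta_fin_two _)] at h
      rcases h with ⟨hb, hc, ha, hd⟩ | ⟨ha, hd, hc, hb⟩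
      · left
        obtain ⟨i, hi⟩ := (cube_root_aux k ω hω _).1 ha
        obtain ⟨j, hj⟩ := (cube_root_aux k ω hω _).1 hd
        refine ⟨i, j, ?_⟩
        rw [Matrix.eta_fin_two (M : Matrix (Fin 2) (Fin 2) k), hb, hc, hi, hj]
      · right
        have h1 : ((M : Matrix (Fin 2) (Fin 2) k) 0 1 * lam) ^ 3 = 1 := by
          apply mul_left_cancel₀ hr
          rw [mul_pow]
          linear_combination hb + ((M : Matrix (Fin 2) (Fin 2) k) 0 1) ^ 3 * hl3
        have h1b : ((M : Matrix (Fin 2) (Fin 2) k) 1 0 * lam⁻¹) ^ 3 = 1 := by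
          rw [mul_pow, inv_pow, mul_inv_eq_one₀ (pow_ne_zero 3 hl)]
          apply mul_left_cancel₀ hr
          linear_combination hc - hl3
        obtain ⟨i, hi⟩ := (cube_root_aux k ω hω _).1 h1
        obtain ⟨j, hj⟩ := (cube_root_aux k ω hω _).1 h1b
        refine ⟨i, j, ?_⟩
        rw [← hi, ← hj, mul_inv_cancel_right₀ hl, inv_mul_cancel_right₀ hl]
        conv_lhs => rw [Matrix.eta_fin_two (M : Matrix (Fin 2) (Fin 2) k), ha, hd]
    · rintro (⟨i, j, h⟩ | ⟨i, j, h⟩)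
      · rw [stab_iff_aux k h2 h3 M p r _ _ _ _ hp hr h]
        left
        exact ⟨rfl, rfl, (cube_root_aux k ω hω _).2 ⟨i, rfl⟩,
          (cube_root_aux k ω hω _).2 ⟨j, rfl⟩⟩
      · rw [stab_iff_aux k h2 h3 M p r _ _ _ _ hp hr h]
        right
        have hi := (cube_root_aux k ω hω _).2 ⟨i, rfl⟩
        have hj := (cube_root_aux k ω hω _).2 ⟨j, rfl⟩
        refine ⟨rfl, rfl, ?_, ?_⟩
        · rw [mul_pow, hj]
          linear_combination hl3
        · rw [mul_pow, hi, ← hl3]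
          field_simp
  refine ⟨hset, ?_⟩
  rw [hset]
  let g : (Fin 3 × Fin 3) ⊕ (Fin 3 × Fin 3) → GL (Fin 2) k := fun x => match x with
    | Sum.inl (i, j) => Matrix.GeneralLinearGroup.mkOfDetNeZero
        !![ω ^ (i : ℕ), 0; 0, ω ^ (j : ℕ)] (by simp [Matrix.det_fin_two_of, hω0])
    | Sum.inr (i, j) => Matrix.GeneralLinearGroup.mkOfDetNeZero
        !![0, ω ^ (i : ℕ) * lam⁻¹; ω ^ (j : ℕ) * lam, 0]
        (by simp [Matrix.det_fin_two_of, hω0, hl])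
  have gl : ∀ i j, ((g (Sum.inl (i, j)) : GL (Fin 2) k) : Matrix (Fin 2) (Fin 2) k) =
      !![ω ^ (i : ℕ), 0; 0, ω ^ (j : ℕ)] := fun i j => rfl
  have gr : ∀ i j, ((g (Sum.inr (i, j)) : GL (Fin 2) k) : Matrix (Fin 2) (Fin 2) k) =
      !![0, ω ^ (i : ℕ) * lam⁻¹; ω ^ (j : ℕ) * lam, 0] := fun i j => rfl
  have ginj : Function.Injective g := by
    intro x y h
    have h := congrArg (fun M : GL (Fin 2) k => (M : Matrix (Fin 2) (Fin 2) k)) h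
    rcases x with ⟨i, j⟩ | ⟨i, j⟩ <;> rcases y with ⟨i2, j2⟩ | ⟨i2, j2⟩ <;>
      simp only [gl, gr] at h <;>
      have h00 := congrFun (congrFun h 0) 0 <;>
      have h01 := congrFun (congrFun h 0) 1 <;>
      have h10 := congrFun (congrFun h 1) 0 <;>
      have h11 := congrFun (congrFun h 1) 1 <;>
      simp [hω0, hl] at h00 h01 h10 h11
    · rw [hinj _ _ h00, hinj _ _ h11]
    · rw [hinj _ _ h01, hinj _ _ h10]
  have hrange : {M : GL (Fin 2) k |
          (∃ i j : Fin 3, (M : Matrix (Fin 2) (Fin 2) k) =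
            !![ω ^ (i : ℕ), 0; 0, ω ^ (j : ℕ)]) ∨
          (∃ i j : Fin 3, (M : Matrix (Fin 2) (Fin 2) k) =
            !![0, ω ^ (i : ℕ) * lam⁻¹; ω ^ (j : ℕ) * lam, 0])} = g '' Set.univ := by
    ext M
    simp only [Set.mem_ofPred_eq, Set.image_univ, Set.mem_range]
    constructor
    · rintro (⟨i, j, h⟩ | ⟨i, j, h⟩)
      · exact ⟨Sum.inl (i, j), Units.ext ((gl i j).trans h.symm)⟩
      · exact ⟨Sum.inr (i, j), Units.ext ((gr i j).trans h.symm)⟩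
    · rintro ⟨⟨i, j⟩ | ⟨i, j⟩, rfl⟩
      · exact Or.inl ⟨i, j, gl i j⟩
      · exact Or.inr ⟨i, j, gr i j⟩
  rw [hrange, Set.ncard_image_of_injective _ ginj, Set.ncard_univ]
  simp
end

section
/- For every nondegenerate binary cubic form f over k, the stabilizer {M ∈ GL₂(k) : M·f = f} of f under the GL₂(k)-action by linear substitution of variables is a finite group. -/
open MvPolynomial in
lemma stmt18_eval {k L : Type*} [Field k] [Field L] [Algebra k L] (M : GL (Fin 2) k)
    (a₀ a₁ a₂ a₃ : k)
    (h : glAct k M (cubicForm k a₀ a₁ a₂ a₃) = cubicForm k a₀ a₁ a₂ a₃) (x y : L) :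
    let φ := algebraMap k L
    let F : L → L → L := fun x y =>
      φ a₀ * x ^ 3 + φ a₁ * x ^ 2 * y + φ a₂ * x * y ^ 2 + φ a₃ * y ^ 3
    F (φ (M.1 0 0) * x + φ (M.1 0 1) * y) (φ (M.1 1 0) * x + φ (M.1 1 1) * y) = F x y := by
  have := congrArg (aeval (![x, y] : Fin 2 → L)) h
  simpa [glAct, cubicForm, algebraMap_eq] using this

/-- Two independent zeros of a nondegenerate binary quadratic form. -/
lemma stmt18_quad {L : Type*} [Field L] [IsAlgClosed L] (h2 : (2 : L) ≠ 0) (A B C : L)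
    (h : B ^ 2 - 4 * A * C ≠ 0) :
    ∃ x₁ y₁ x₂ y₂ : L, x₁ * y₂ - x₂ * y₁ ≠ 0 ∧
      A * x₁ ^ 2 + B * x₁ * y₁ + C * y₁ ^ 2 = 0 ∧
      A * x₂ ^ 2 + B * x₂ * y₂ + C * y₂ ^ 2 = 0 := by
  by_cases hA : A = 0
  · subst hA
    refine ⟨1, 0, -C, B, ?_, by ring, by ring⟩
    intro h0
    apply h
    linear_combination B * h0
  · obtain ⟨s, hs⟩ := IsAlgClosed.exists_pow_nat_eq (B ^ 2 - 4 * A * C) (n := 2) (by norm_num)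
    have hs0 : s ≠ 0 := by
      rintro rfl
      apply h
      rw [← hs]; ring
    refine ⟨-B + s, 2 * A, -B - s, 2 * A, ?_, ?_, ?_⟩
    · have : (-B + s) * (2 * A) - (-B - s) * (2 * A) = 2 * 2 * A * s := by ring
      rw [this]
      exact mul_ne_zero (mul_ne_zero (mul_ne_zero h2 h2) hA) hs0
    · linear_combination A * hs
    · linear_combination A * hs

/-- Diagonalisation of a nondegenerate binary cubic form over an algebraically closed field. -/
lemma stmt18_diag {L : Type*} [Field L] [IsAlgClosed L] (h2 : (2 : L) ≠ 0) (h3 : (3 : L) ≠ 0)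
    (a₀ a₁ a₂ a₃ : L) (hΔ : cubicDisc L a₀ a₁ a₂ a₃ ≠ 0) :
    ∃ x₁ y₁ x₂ y₂ b c : L, x₁ * y₂ - x₂ * y₁ ≠ 0 ∧ b ≠ 0 ∧ c ≠ 0 ∧ ∀ u v : L,
      a₀ * (x₁ * u + x₂ * v) ^ 3 + a₁ * (x₁ * u + x₂ * v) ^ 2 * (y₁ * u + y₂ * v)
       + a₂ * (x₁ * u + x₂ * v) * (y₁ * u + y₂ * v) ^ 2 + a₃ * (y₁ * u + y₂ * v) ^ 3
       = b * u ^ 3 + c * v ^ 3 := by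
  obtain ⟨x₁, y₁, x₂, y₂, hD, e₁, e₂⟩ := stmt18_quad h2 (a₁ ^ 2 - 3 * a₀ * a₂)
    (a₁ * a₂ - 9 * a₀ * a₃) (a₂ ^ 2 - 3 * a₁ * a₃) (by
      have : (a₁ * a₂ - 9 * a₀ * a₃) ^ 2 - 4 * (a₁ ^ 2 - 3 * a₀ * a₂) * (a₂ ^ 2 - 3 * a₁ * a₃)
        = -3 * cubicDisc L a₀ a₁ a₂ a₃ := by unfold cubicDisc; ring
      rw [this]
      exact mul_ne_zero (neg_ne_zero.2 h3) hΔ)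
  obtain ⟨b₀, hb₀⟩ : ∃ b₀, b₀ = a₀ * x₁ ^ 3 + a₁ * x₁ ^ 2 * y₁ + a₂ * x₁ * y₁ ^ 2
    + a₃ * y₁ ^ 3 := ⟨_, rfl⟩
  obtain ⟨b₁, hb₁⟩ : ∃ b₁, b₁ = 3 * a₀ * x₁ ^ 2 * x₂ + a₁ * (x₁ ^ 2 * y₂ + 2 * x₁ * x₂ * y₁)
    + a₂ * (y₁ ^ 2 * x₂ + 2 * x₁ * y₁ * y₂) + 3 * a₃ * y₁ ^ 2 * y₂ := ⟨_, rfl⟩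
  obtain ⟨b₂, hb₂⟩ : ∃ b₂, b₂ = 3 * a₀ * x₂ ^ 2 * x₁ + a₁ * (x₂ ^ 2 * y₁ + 2 * x₂ * x₁ * y₂)
    + a₂ * (y₂ ^ 2 * x₁ + 2 * x₂ * y₂ * y₁) + 3 * a₃ * y₂ ^ 2 * y₁ := ⟨_, rfl⟩
  obtain ⟨b₃, hb₃⟩ : ∃ b₃, b₃ = a₀ * x₂ ^ 3 + a₁ * x₂ ^ 2 * y₂ + a₂ * x₂ * y₂ ^ 2
    + a₃ * y₂ ^ 3 := ⟨_, rfl⟩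
  have E₁ : b₁ ^ 2 - 3 * b₀ * b₂ = 0 := by
    rw [hb₀, hb₁, hb₂]
    linear_combination (x₁ * y₂ - x₂ * y₁) ^ 2 * e₁
  have E₂ : b₂ ^ 2 - 3 * b₁ * b₃ = 0 := by
    rw [hb₃, hb₁, hb₂]
    linear_combination (x₁ * y₂ - x₂ * y₁) ^ 2 * e₂
  have E₃ : cubicDisc L b₀ b₁ b₂ b₃ ≠ 0 := by
    have : cubicDisc L b₀ b₁ b₂ b₃ = (x₁ * y₂ - x₂ * y₁) ^ 6 * cubicDisc L a₀ a₁ a₂ a₃ := by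
      rw [hb₀, hb₁, hb₂, hb₃]; unfold cubicDisc; ring
    rw [this]
    exact mul_ne_zero (pow_ne_zero _ hD) hΔ
  have E₄ : b₁ * b₂ - 9 * b₀ * b₃ ≠ 0 := by
    intro h
    have : -3 * cubicDisc L b₀ b₁ b₂ b₃ = 0 := by
      unfold cubicDisc
      linear_combination (b₁ * b₂ - 9 * b₀ * b₃) * h - 4 * (b₂ ^ 2 - 3 * b₁ * b₃) * E₁
    exact mul_ne_zero (neg_ne_zero.2 h3) E₃ this
  have h12 : b₁ * b₂ = 0 := by
    have : (b₁ * b₂) * (b₁ * b₂ - 9 * b₀ * b₃) = 0 := by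
      linear_combination b₂ ^ 2 * E₁ + 3 * b₀ * b₂ * E₂
    exact (mul_eq_zero.1 this).resolve_right E₄
  have hz : b₁ = 0 ∧ b₂ = 0 := by
    rcases mul_eq_zero.1 h12 with h | h
    · refine ⟨h, ?_⟩
      rw [h] at E₂
      simpa using E₂
    · refine ⟨?_, h⟩
      rw [h] at E₁
      simpa using E₁
  obtain ⟨z₁, z₂⟩ := hz
  refine ⟨x₁, y₁, x₂, y₂, b₀, b₃, hD, ?_, ?_, ?_⟩
  · intro h
    apply E₄
    rw [h, z₁]; ring
  · intro h
    apply E₄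
    rw [h, z₁]; ring
  · intro u v
    have : b₀ * u ^ 3 + b₃ * v ^ 3 = b₀ * u ^ 3 + b₁ * u ^ 2 * v + b₂ * u * v ^ 2 + b₃ * v ^ 3 := by
      rw [z₁, z₂]; ring
    rw [this, hb₀, hb₁, hb₂, hb₃]
    ring

/-- The stabilizer of a diagonal form. -/
lemma stmt18_stab {L : Type*} [Field L] (h2 : (2 : L) ≠ 0) (h3 : (3 : L) ≠ 0)
    (p q a b c d : L) (hp : p ≠ 0) (hq : q ≠ 0) (hdet : a * d - b * c ≠ 0)
    (h : ∀ u v : L, p * (a * u + b * v) ^ 3 + q * (c * u + d * v) ^ 3 = p * u ^ 3 + q * v ^ 3) :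
    (a ^ 3 = 0 ∨ a ^ 3 = 1) ∧ (b ^ 3 = 0 ∨ b ^ 3 = q / p) ∧ (c ^ 3 = 0 ∨ c ^ 3 = p / q) ∧
      (d ^ 3 = 0 ∨ d ^ 3 = 1) := by
  have k₁ : p * a ^ 3 + q * c ^ 3 = p := by linear_combination h 1 0
  have k₂ : p * b ^ 3 + q * d ^ 3 = q := by linear_combination h 0 1
  have k₃ : p * a ^ 2 * b + q * c ^ 2 * d = 0 := by
    have : (2 * 3) * (p * a ^ 2 * b + q * c ^ 2 * d) = 0 := by
      linear_combination h 1 1 - h 1 (-1) - 2 * h 0 1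
    exact (mul_eq_zero.1 this).resolve_left (mul_ne_zero h2 h3)
  have k₄ : p * a * b ^ 2 + q * c * d ^ 2 = 0 := by
    have : (2 * 3) * (p * a * b ^ 2 + q * c * d ^ 2) = 0 := by
      linear_combination h 1 1 + h 1 (-1) - 2 * h 1 0
    exact (mul_eq_zero.1 this).resolve_left (mul_ne_zero h2 h3)
  have hab : a * b = 0 := by
    have : (p * (a * d - b * c)) * (a * b) = 0 := by linear_combination d * k₃ - c * k₄
    exact (mul_eq_zero.1 this).resolve_left (mul_ne_zero hp hdet)
  have hcd : c * d = 0 := by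
    have : (q * (a * d - b * c)) * (c * d) = 0 := by linear_combination a * k₄ - b * k₃
    exact (mul_eq_zero.1 this).resolve_left (mul_ne_zero hq hdet)
  rcases mul_eq_zero.1 hab with ha | hb
  · subst ha
    have hc : c ≠ 0 := by rintro rfl; apply hdet; ring
    have hd : d = 0 := (mul_eq_zero.1 hcd).resolve_left hc
    subst hd
    refine ⟨Or.inl (by ring), Or.inr ?_, Or.inr ?_, Or.inl (by ring)⟩
    · rw [eq_div_iff hp]; linear_combination k₂
    · rw [eq_div_iff hq]; linear_combination k₁
  · subst hb
    have hd : d ≠ 0 := by rintro rfl; apply hdet; ring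
    have hc : c = 0 := (mul_eq_zero.1 hcd).resolve_right hd
    subst hc
    refine ⟨Or.inr ?_, Or.inl (by ring), Or.inl (by ring), Or.inr ?_⟩
    · apply mul_left_cancel₀ hp; linear_combination k₁
    · apply mul_left_cancel₀ hq; linear_combination k₂

lemma stmt18_roots {L : Type*} [Field L] (t : L) : {x : L | x ^ 3 = t}.Finite := by
  have h : (Polynomial.X ^ 3 - Polynomial.C t : Polynomial L) ≠ 0 :=
    Polynomial.X_pow_sub_C_ne_zero (by norm_num) t
  refine (Polynomial.finite_setOfPred_isRoot h).subset ?_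
  intro x hx
  have hx' : x ^ 3 = t := hx
  simp [hx']

lemma stmt18_core (k L : Type*) [Field k] [Field L] [Algebra k L] [IsAlgClosed L]
    (h2 : (2 : k) ≠ 0) (h3 : (3 : k) ≠ 0)
    (a₀ a₁ a₂ a₃ : k) (hΔ : cubicDisc k a₀ a₁ a₂ a₃ ≠ 0) :
    {M : GL (Fin 2) k |
      glAct k M (cubicForm k a₀ a₁ a₂ a₃) = cubicForm k a₀ a₁ a₂ a₃}.Finite := by
  let φ := algebraMap k L
  have hφ : Function.Injective φ := φ.injective
  have h2' : (2 : L) ≠ 0 := by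
    intro h; apply h2; apply hφ; rw [map_ofNat, map_zero]; exact h
  have h3' : (3 : L) ≠ 0 := by
    intro h; apply h3; apply hφ; rw [map_ofNat, map_zero]; exact h
  have hΔ' : cubicDisc L (φ a₀) (φ a₁) (φ a₂) (φ a₃) ≠ 0 := by
    have : cubicDisc L (φ a₀) (φ a₁) (φ a₂) (φ a₃) = φ (cubicDisc k a₀ a₁ a₂ a₃) := by
      simp only [cubicDisc, map_sub, map_add, map_mul, map_pow, map_neg, map_ofNat]
    rw [this]
    exact (map_ne_zero φ).2 hΔ
  obtain ⟨x₁, y₁, x₂, y₂, p, q, hD, hp, hq, hdiag⟩ := stmt18_diag h2' h3' _ _ _ _ hΔ'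
  let P : Matrix (Fin 2) (Fin 2) L := !![x₁, x₂; y₁, y₂]
  have hP : IsUnit P.det := by
    rw [Matrix.det_fin_two_of]; exact hD.isUnit
  let T : Set L := {x | x ^ 3 = 0} ∪ {x | x ^ 3 = 1} ∪ {x | x ^ 3 = q / p} ∪ {x | x ^ 3 = p / q}
  have hT : T.Finite := (((stmt18_roots _).union (stmt18_roots _)).union (stmt18_roots _)).union
    (stmt18_roots _)
  have hS : {N : Matrix (Fin 2) (Fin 2) L | ∀ i j, N i j ∈ T}.Finite :=
    Set.Finite.pi' (fun _ => Set.Finite.pi' (fun _ => hT))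
  refine Set.Finite.of_injOn (f := fun M : GL (Fin 2) k => P⁻¹ * M.1.map φ * P) ?_ ?_ hS
  · intro M hM
    have hev := stmt18_eval (L := L) M a₀ a₁ a₂ a₃ hM
    obtain ⟨N, hN⟩ : ∃ N, N = P⁻¹ * M.1.map φ * P := ⟨_, rfl⟩
    have hPN : P * N = M.1.map φ * P := by
      rw [hN, Matrix.mul_assoc, Matrix.mul_nonsing_inv_cancel_left _ _ hP]
    have hdet : N.det ≠ 0 := by
      have h1 := congrArg Matrix.det hPN
      rw [Matrix.det_mul, Matrix.det_mul, mul_comm] at h1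
      have h2 := mul_right_cancel₀ hP.ne_zero h1
      rw [h2]
      have : (M.1.map φ).det = φ M.1.det := (RingHom.map_det φ M.1).symm
      rw [this]
      exact (map_ne_zero φ).2 ((Matrix.isUnit_iff_isUnit_det _).1 M.isUnit).ne_zero
    rw [Matrix.det_fin_two] at hdet
    have e := fun i j => congrFun (congrFun hPN i) j
    have e00 := e 0 0
    have e01 := e 0 1
    have e10 := e 1 0
    have e11 := e 1 1
    simp [P, Matrix.mul_apply, Fin.sum_univ_two] at e00 e01 e10 e11
    have key := stmt18_stab h2' h3' p q (N 0 0) (N 0 1) (N 1 0) (N 1 1) hp hq hdet (by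
      intro u v
      rw [← hdiag, ← hdiag u v]
      have := hev (x₁ * u + x₂ * v) (y₁ * u + y₂ * v)
      simp only at this
      rw [← this]
      have i1 : x₁ * (N 0 0 * u + N 0 1 * v) + x₂ * (N 1 0 * u + N 1 1 * v) =
        φ (M.1 0 0) * (x₁ * u + x₂ * v) + φ (M.1 0 1) * (y₁ * u + y₂ * v) := by
        linear_combination u * e00 + v * e01
      have i2 : y₁ * (N 0 0 * u + N 0 1 * v) + y₂ * (N 1 0 * u + N 1 1 * v) =
        φ (M.1 1 0) * (x₁ * u + x₂ * v) + φ (M.1 1 1) * (y₁ * u + y₂ * v) := by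
        linear_combination u * e10 + v * e11
      rw [i1, i2])
    obtain ⟨c1, c2, c3, c4⟩ := key
    show ∀ i j, (P⁻¹ * M.1.map φ * P) i j ∈ T
    rw [← hN]
    have d1 : N 0 0 ∈ T := c1.elim (fun h => Or.inl (Or.inl (Or.inl h)))
      (fun h => Or.inl (Or.inl (Or.inr h)))
    have d2 : N 0 1 ∈ T := c2.elim (fun h => Or.inl (Or.inl (Or.inl h)))
      (fun h => Or.inl (Or.inr h))
    have d3 : N 1 0 ∈ T := c3.elim (fun h => Or.inl (Or.inl (Or.inl h)))
      (fun h => Or.inr h)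
    have d4 : N 1 1 ∈ T := c4.elim (fun h => Or.inl (Or.inl (Or.inl h)))
      (fun h => Or.inl (Or.inl (Or.inr h)))
    rw [Fin.forall_fin_two, Fin.forall_fin_two, Fin.forall_fin_two]
    exact ⟨⟨d1, d2⟩, ⟨d3, d4⟩⟩
  · intro M _ M' _ h
    have h : P⁻¹ * M.1.map φ * P = P⁻¹ * M'.1.map φ * P := h
    have h1 := congrArg (fun Z => P * Z * P⁻¹) h
    simp only [Matrix.mul_assoc, Matrix.mul_nonsing_inv _ hP,
      Matrix.mul_nonsing_inv_cancel_left _ _ hP, Matrix.mul_one] at h1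
    exact Units.ext (Matrix.map_injective hφ h1)

theorem stmt18 (k : Type*) [Field k] (h2 : (2 : k) ≠ 0) (h3 : (3 : k) ≠ 0)
    (ω : k) (hω : IsPrimitiveRoot ω 3)
    (a₀ a₁ a₂ a₃ : k) (hΔ : cubicDisc k a₀ a₁ a₂ a₃ ≠ 0) :
    {M : GL (Fin 2) k |
      glAct k M (cubicForm k a₀ a₁ a₂ a₃) = cubicForm k a₀ a₁ a₂ a₃}.Finite := by
  exact stmt18_core k (AlgebraicClosure k) h2 h3 a₀ a₁ a₂ a₃ hΔ
end
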